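/- arXiv:2210.17278 — 3 statements merged into one kernel-verified Lean document; each statement's English description precedes it below -/
import Mathlib

section
/- Let (X,τ) be a topological space and 𝒫 a primal on X, and let σ = {A ⊆ X : A ⊆ Ψ(A)}. Then σ is a topology on X (it contains ∅ and X, and is closed under finite intersections and arbitrary unions), and moreover σ coincides with the primal topology τ⋄, i.e., A ⊆ Ψ(A) if and only if (X \ A)⋄ ⊆ X \ A. -/
open Set

/-- A collection `P` of subsets of `X` is a *primal* on `X`. -/
structure IsSetPrimal {X : Type*} (P : Set (Set X)) : Prop where
  univ_not_mem : Set.univ ∉ P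
  mem_of_subset : ∀ {A B : Set X}, A ∈ P → B ⊆ A → B ∈ P
  mem_or_mem_of_inter_mem : ∀ {A B : Set X}, A ∩ B ∈ P → A ∈ P ∨ B ∈ P

/-- The primal-diamond operator: `A⋄ = {x | ∀ open U ∋ x, Aᶜ ∪ Uᶜ ∈ P}`. -/
def primalDiamond {X : Type*} [TopologicalSpace X] (P : Set (Set X)) (A : Set X) : Set X :=
  {x | ∀ U : Set X, IsOpen U → x ∈ U → Aᶜ ∪ Uᶜ ∈ P}

/-- The `Ψ` operator: `Ψ(A) = {x | ∃ open U ∋ x, (U \ A)ᶜ ∉ P}`. -/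
def primalPsi {X : Type*} [TopologicalSpace X] (P : Set (Set X)) (A : Set X) : Set X :=
  {x | ∃ U : Set X, IsOpen U ∧ x ∈ U ∧ (U \ A)ᶜ ∉ P}

/-- The topology is *suitable* for the primal `P` if `Aᶜ ∪ A⋄ ∉ P` for all `A`. -/
def SuitableForPrimal {X : Type*} [TopologicalSpace X] (P : Set (Set X)) : Prop :=
  ∀ A : Set X, Aᶜ ∪ primalDiamond P A ∉ P

/-!
The complement of a primal `P` is a filter `F`, and `x ∈ Ψ(A)` holds exactly when `A ∈ 𝓝 x ⊓ F`.
So `A ⊆ Ψ(A)` says that `A` belongs to the filter `𝓝 x ⊓ F` for every `x ∈ A`, and for any family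
of filters indexed by the points the sets with this property are the open sets of a topology.
Since `(U \ A)ᶜ = A ∪ Uᶜ`, the operators `Ψ` and `⋄` are conjugate under complementation.
-/

open Filter Topology

theorem primalPsi_eq_compl_primalDiamond_compl {X : Type*} [TopologicalSpace X]
    (P : Set (Set X)) (A : Set X) : primalPsi P A = (primalDiamond P Aᶜ)ᶜ := by
  ext x
  have compl_sdiff_eq (U : Set X) : (U \ A)ᶜ = Aᶜᶜ ∪ Uᶜ := by
    rw [sdiff_eq, compl_inter, union_comm]
  simp only [primalPsi, primalDiamond, mem_ofPred_eq, mem_compl_iff, compl_sdiff_eq, not_forall,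
    exists_prop]

theorem subset_primalPsi_iff_primalDiamond_compl_subset {X : Type*} [TopologicalSpace X]
    (P : Set (Set X)) (A : Set X) : A ⊆ primalPsi P A ↔ primalDiamond P Aᶜ ⊆ Aᶜ := by
  rw [primalPsi_eq_compl_primalDiamond_compl, subset_compl_comm]

namespace IsSetPrimal

variable {X : Type*} {P : Set (Set X)}

/-- The filter dual to a primal `P`: its members are the sets that do not belong to `P`. It is the
improper filter when `P = ∅`. -/
def dualFilter (hP : IsSetPrimal P) : Filter X where
  sets := Pᶜ
  univ_sets := hP.univ_not_mem
  sets_of_superset hA hAB hB := hA (hP.mem_of_subset hB hAB)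
  inter_sets hA hB hAB := (hP.mem_or_mem_of_inter_mem hAB).elim hA hB

theorem mem_dualFilter (hP : IsSetPrimal P) {A : Set X} : A ∈ hP.dualFilter ↔ A ∉ P :=
  Iff.rfl

variable [TopologicalSpace X]

theorem mem_primalPsi_iff_mem_nhds_inf (hP : IsSetPrimal P) {A : Set X} {x : X} :
    x ∈ primalPsi P A ↔ A ∈ 𝓝 x ⊓ hP.dualFilter := by
  rw [mem_inf_iff_superset]
  constructor
  · rintro ⟨U, hU, hxU, hUA⟩
    have inter_subset : U ∩ (U \ A)ᶜ ⊆ A := fun y hy => by_contra fun hyA => hy.2 ⟨hy.1, hyA⟩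
    exact ⟨U, hU.mem_nhds hxU, (U \ A)ᶜ, hP.mem_dualFilter.2 hUA, inter_subset⟩
  · rintro ⟨N, hN, B, hB, hNB⟩
    obtain ⟨U, hUN, hU, hxU⟩ := mem_nhds_iff.1 hN
    have subset_compl : B ⊆ (U \ A)ᶜ := fun y hyB hy => hy.2 (hNB ⟨hUN hy.1, hyB⟩)
    exact ⟨U, hU, hxU, hP.mem_dualFilter.1 (mem_of_superset hB subset_compl)⟩

/-- The topology `σ` whose open sets are the `A` with `A ⊆ Ψ(A)`. It is encoded through the
filters `𝓝 x ⊓ hP.dualFilter`, so that the topology axioms come from `TopologicalSpace.mkOfNhds`. -/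
abbrev psiTopology (hP : IsSetPrimal P) : TopologicalSpace X :=
  .mkOfNhds fun x => 𝓝 x ⊓ hP.dualFilter

theorem isOpen_psiTopology_iff (hP : IsSetPrimal P) {A : Set X} :
    IsOpen[hP.psiTopology] A ↔ A ⊆ primalPsi P A :=
  forall₂_congr fun _ _ => hP.mem_primalPsi_iff_mem_nhds_inf.symm

end IsSetPrimal

theorem stmt_14 {X : Type*} [TopologicalSpace X] (P : Set (Set X)) (hP : IsSetPrimal P) :
    ((∅ : Set X) ⊆ primalPsi P ∅) ∧
    ((Set.univ : Set X) ⊆ primalPsi P Set.univ) ∧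
    (∀ A B : Set X, A ⊆ primalPsi P A → B ⊆ primalPsi P B →
      A ∩ B ⊆ primalPsi P (A ∩ B)) ∧
    (∀ S : Set (Set X), (∀ A ∈ S, A ⊆ primalPsi P A) → ⋃₀ S ⊆ primalPsi P (⋃₀ S)) ∧
    (∀ A : Set X, A ⊆ primalPsi P A ↔ primalDiamond P Aᶜ ⊆ Aᶜ) := by
  refine ⟨empty_subset _, ?_, ?_, ?_, subset_primalPsi_iff_primalDiamond_compl_subset P⟩ <;>
    simp only [← hP.isOpen_psiTopology_iff]
  · exact hP.psiTopology.isOpen_univ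
  · exact hP.psiTopology.isOpen_inter
  · exact hP.psiTopology.isOpen_sUnion
end

section
/- Let (X,τ) be a topological space and 𝒫 a primal on X. The following are equivalent: (1) τ is suitable for 𝒫, i.e., Aᶜ ∪ A⋄ ∉ 𝒫 for all A ⊆ X; (2) for every τ⋄-closed subset A of X (i.e., A⋄ ⊆ A), Aᶜ ∪ A⋄ ∉ 𝒫; (3) for every A ⊆ X, if for each x ∈ A there exists an open set Uₓ containing x with Uₓᶜ ∪ Aᶜ ∉ 𝒫, then Aᶜ ∉ 𝒫; (4) for every A ⊆ X, if A ∩ A⋄ = ∅ then Aᶜ ∉ 𝒫. -/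
/-!
If an open set `U` satisfies `Aᶜ ∪ Uᶜ ∉ P`, then `U` witnesses that none of its points lies in
`A⋄`, so `A` and `A ∪ A⋄` have the same trace on `U`. Hence `(A ∪ A⋄)⋄ ⊆ A⋄`: the set `A ∪ A⋄` is
`τ⋄`-closed, and testing (2) on it gives (4). Conversely, `A \ A⋄` is disjoint from its own diamond
and its complement is `Aᶜ ∪ A⋄`, so testing (4) on it gives (1).
-/

open Set

section Diamond

variable {X : Type*}

theorem IsSetPrimal.isLowerSet {P : Set (Set X)} (hP : IsSetPrimal P) : IsLowerSet P :=
  fun _ _ hBA hA => hP.mem_of_subset hA hBA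

variable [TopologicalSpace X] {P : Set (Set X)}

theorem notMem_primalDiamond_iff {A : Set X} {x : X} :
    x ∉ primalDiamond P A ↔ ∃ U : Set X, IsOpen U ∧ x ∈ U ∧ Aᶜ ∪ Uᶜ ∉ P := by
  simp [primalDiamond]

theorem inter_primalDiamond_eq_empty_iff {A : Set X} :
    A ∩ primalDiamond P A = ∅ ↔ ∀ x ∈ A, ∃ U : Set X, IsOpen U ∧ x ∈ U ∧ Uᶜ ∪ Aᶜ ∉ P := by
  simp only [← disjoint_iff_inter_eq_empty, disjoint_left, notMem_primalDiamond_iff, union_comm]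

theorem primalDiamond_mono (hP : IsLowerSet P) : Monotone (primalDiamond P) :=
  fun _ _ hAB _ hx U hU hxU =>
    hP (union_subset_union_left Uᶜ (compl_subset_compl.2 hAB)) (hx U hU hxU)

theorem disjoint_primalDiamond_of_compl_union_compl_notMem {A U : Set X} (hU : IsOpen U)
    (hAU : Aᶜ ∪ Uᶜ ∉ P) : Disjoint U (primalDiamond P A) :=
  disjoint_left.2 fun _ hxU => notMem_primalDiamond_iff.2 ⟨U, hU, hxU, hAU⟩

theorem primalDiamond_union_primalDiamond_subset (A : Set X) :
    primalDiamond P (A ∪ primalDiamond P A) ⊆ primalDiamond P A := by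
  intro x hx U hU hxU
  by_contra hAU
  have hdisj : primalDiamond P A ∩ U = ∅ :=
    (disjoint_primalDiamond_of_compl_union_compl_notMem hU hAU).symm.inter_eq
  have htrace : (A ∪ primalDiamond P A) ∩ U = A ∩ U := by
    rw [union_inter_distrib_right, hdisj, union_empty]
  have hcompl : (A ∪ primalDiamond P A)ᶜ ∪ Uᶜ = Aᶜ ∪ Uᶜ := by
    rw [← compl_inter, htrace, compl_inter]
  exact hAU (hcompl ▸ hx U hU hxU)

theorem sdiff_primalDiamond_inter_primalDiamond_eq_empty (hP : IsLowerSet P) (A : Set X) :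
    (A \ primalDiamond P A) ∩ primalDiamond P (A \ primalDiamond P A) = ∅ :=
  (disjoint_sdiff_left.mono_right (primalDiamond_mono hP sdiff_subset)).inter_eq

theorem stmt_15_general (hP : IsLowerSet P) :
    List.TFAE
      [ SuitableForPrimal P,
        ∀ A : Set X, primalDiamond P A ⊆ A → Aᶜ ∪ primalDiamond P A ∉ P,
        ∀ A : Set X, (∀ x ∈ A, ∃ U : Set X, IsOpen U ∧ x ∈ U ∧ Uᶜ ∪ Aᶜ ∉ P) → Aᶜ ∉ P,
        ∀ A : Set X, A ∩ primalDiamond P A = ∅ → Aᶜ ∉ P ] := by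
  tfae_have 1 → 2 := fun hsuit A _ => hsuit A
  tfae_have 2 → 4 := by
    intro hclosed A hA hAP
    have hsub := primalDiamond_union_primalDiamond_subset (P := P) A
    have hdisj : primalDiamond P A ⊆ Aᶜ :=
      (disjoint_iff_inter_eq_empty.2 hA).subset_compl_left
    exact hclosed (A ∪ primalDiamond P A) (hsub.trans subset_union_right) <| hP
      (union_subset (compl_subset_compl.2 subset_union_left) (hsub.trans hdisj)) hAP
  tfae_have 4 → 1 := by
    intro hdisj A
    have hcompl : (A \ primalDiamond P A)ᶜ = Aᶜ ∪ primalDiamond P A := by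
      rw [compl_sdiff, union_comm]
    exact hcompl ▸ hdisj _ (sdiff_primalDiamond_inter_primalDiamond_eq_empty hP A)
  tfae_have 3 ↔ 4 := by simp only [inter_primalDiamond_eq_empty_iff]
  tfae_finish

end Diamond

theorem stmt_15 {X : Type*} [TopologicalSpace X] (P : Set (Set X)) (hP : IsSetPrimal P) :
    List.TFAE
      [ SuitableForPrimal P,
        ∀ A : Set X, primalDiamond P A ⊆ A → Aᶜ ∪ primalDiamond P A ∉ P,
        ∀ A : Set X, (∀ x ∈ A, ∃ U : Set X, IsOpen U ∧ x ∈ U ∧ Uᶜ ∪ Aᶜ ∉ P) → Aᶜ ∉ P,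
        ∀ A : Set X, A ∩ primalDiamond P A = ∅ → Aᶜ ∉ P ] :=
  stmt_15_general hP.isLowerSet
end

section
/- Let (X,τ) be a topological space and 𝒫 a primal on X. The following three conditions are equivalent: (1) for every A ⊆ X, if A ∩ A⋄ = ∅ then A⋄ = ∅; (2) for every A ⊆ X, (A \ A⋄)⋄ = ∅; (3) for every A ⊆ X, (A ∩ A⋄)⋄ = A⋄. Moreover, if τ is suitable for 𝒫, then these conditions hold. -/
open Set

/-! The sets outside a primal `P` form a filter `F`, and `A⋄` is the set of cluster points of
`F ⊓ 𝓟 A`, so that `⋄` commutes with unions. Hence `A⋄ = (A ∩ A⋄)⋄ ∪ (A \ A⋄)⋄`, where `A \ A⋄` is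
disjoint from its own diamond. If the topology is suitable and `A ∩ A⋄ = ∅`, then
`Aᶜ = Aᶜ ∪ A⋄ ∈ F`, that is, `F ⊓ 𝓟 A = ⊥`, which has no cluster points. -/

open scoped Filter

section PrimalDiamond

variable {X : Type*} {P : Set (Set X)}

/-- The filter of the sets outside a primal, whose cluster points describe the diamond operator.
It is `⊥` exactly for the empty primal. -/
def IsSetPrimal.toFilter (hP : IsSetPrimal P) : Filter X where
  sets := Pᶜ
  univ_sets := hP.univ_not_mem
  sets_of_superset hA hAB hB := hA (hP.mem_of_subset hB hAB)
  inter_sets hA hB hAB := (hP.mem_or_mem_of_inter_mem hAB).elim hA hB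

theorem IsSetPrimal.mem_toFilter (hP : IsSetPrimal P) {A : Set X} : A ∈ hP.toFilter ↔ A ∉ P :=
  Iff.rfl

variable [TopologicalSpace X] {A B : Set X}

theorem primalDiamond_eq_empty_of_compl_notMem (hA : Aᶜ ∉ P) : primalDiamond P A = ∅ :=
  eq_empty_of_forall_notMem fun x hx =>
    hA (by simpa only [compl_univ, union_empty] using hx univ isOpen_univ (mem_univ x))

theorem SuitableForPrimal.primalDiamond_eq_empty (hS : SuitableForPrimal P)
    (hA : A ∩ primalDiamond P A = ∅) : primalDiamond P A = ∅ := by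
  have hAc : Aᶜ ∪ primalDiamond P A = Aᶜ :=
    union_eq_left.2 (disjoint_iff_inter_eq_empty.2 hA).subset_compl_left
  exact primalDiamond_eq_empty_of_compl_notMem (hAc ▸ hS A)

namespace IsSetPrimal

theorem primalDiamond_empty (hP : IsSetPrimal P) : primalDiamond P ∅ = ∅ :=
  primalDiamond_eq_empty_of_compl_notMem (compl_empty ▸ hP.univ_not_mem)

theorem mem_primalDiamond_iff_clusterPt (hP : IsSetPrimal P) {x : X} :
    x ∈ primalDiamond P A ↔ ClusterPt x (hP.toFilter ⊓ 𝓟 A) := by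
  have frequently_iff (U : Set X) : (∃ᶠ y in hP.toFilter ⊓ 𝓟 A, y ∈ U) ↔ Aᶜ ∪ Uᶜ ∈ P := by
    change Uᶜ ∉ hP.toFilter ⊓ 𝓟 A ↔ _
    rw [Filter.mem_inf_principal', hP.mem_toFilter, not_not]
  simp only [(nhds_basis_opens x).clusterPt_iff_frequently, frequently_iff, and_imp]
  exact forall_congr' fun _ => forall_comm

theorem primalDiamond_mono (hP : IsSetPrimal P) (hAB : A ⊆ B) :
    primalDiamond P A ⊆ primalDiamond P B := fun _ hx =>
  hP.mem_primalDiamond_iff_clusterPt.2 <|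
    (hP.mem_primalDiamond_iff_clusterPt.1 hx).mono <|
      inf_le_inf_left _ (Filter.principal_mono.2 hAB)

theorem primalDiamond_union (hP : IsSetPrimal P) (A B : Set X) :
    primalDiamond P (A ∪ B) = primalDiamond P A ∪ primalDiamond P B := by
  ext x
  simp only [mem_union, hP.mem_primalDiamond_iff_clusterPt, ← Filter.sup_principal, inf_sup_left,
    clusterPt_sup]

theorem primalDiamond_inter_union_primalDiamond_sdiff (hP : IsSetPrimal P) (A B : Set X) :
    primalDiamond P (A ∩ B) ∪ primalDiamond P (A \ B) = primalDiamond P A := by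
  rw [← hP.primalDiamond_union, inter_union_sdiff]

theorem disjoint_sdiff_primalDiamond (hP : IsSetPrimal P) (A : Set X) :
    Disjoint (A \ primalDiamond P A) (primalDiamond P (A \ primalDiamond P A)) :=
  disjoint_sdiff_left.mono_right (hP.primalDiamond_mono sdiff_subset)

end IsSetPrimal

end PrimalDiamond

theorem stmt_16 {X : Type*} [TopologicalSpace X] (P : Set (Set X)) (hP : IsSetPrimal P) :
    List.TFAE
      [ ∀ A : Set X, A ∩ primalDiamond P A = ∅ → primalDiamond P A = ∅,
        ∀ A : Set X, primalDiamond P (A \ primalDiamond P A) = ∅,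
        ∀ A : Set X, primalDiamond P (A ∩ primalDiamond P A) = primalDiamond P A ] ∧
    (SuitableForPrimal P →
      ∀ A : Set X, A ∩ primalDiamond P A = ∅ → primalDiamond P A = ∅) := by
  refine ⟨?_, fun hS A hA => hS.primalDiamond_eq_empty hA⟩
  tfae_have 1 → 2 := fun h A => h _ (hP.disjoint_sdiff_primalDiamond A).inter_eq
  tfae_have 2 → 3 := fun h A => by
    have hA := hP.primalDiamond_inter_union_primalDiamond_sdiff A (primalDiamond P A)
    rwa [h A, union_empty] at hA
  tfae_have 3 → 1 := fun h A hA => by rw [← h A, hA, hP.primalDiamond_empty]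
  tfae_finish
end
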